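/- Assume the continuous residual r satisfies r' ∈ L¹(Ω). Then there exists a constant c > 0 depending only on Ω, a, b and c such that for every N > c and every equidistributing mesh, the intensity parameter α_h satisfies (1 + (c/N)^{2/3})^{−3/2} ‖r‖_{L^{2/3}(Ω)} ≤ √α_h ≤ (1 − (c/N)^{2/3})^{−3/2} ( ‖r‖_{L^{2/3}(Ω)}^{2/3} + (c ‖r'‖_{L¹(Ω)} / N)^{2/3} )^{3/2}. -/

import Mathlib

/-!
Setting of Huang–He, "Error analysis for equidistributing meshes":
the boundary value problem  −(a u')' + b u' + c u = f on Ω = (0,1), u(0)=u(1)=0,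
its linear finite element discretization on a mesh 0 = x₀ < ⋯ < x_N = 1,
and the residual-based equidistribution quantities.
-/

noncomputable section
open MeasureTheory Real

namespace EquidMesh

/-- L² norm on (0,1). -/
def L2 (g : ℝ → ℝ) : ℝ := Real.sqrt (∫ t in (0:ℝ)..1, (g t)^2)

/-- L¹ norm on (0,1). -/
def L1 (g : ℝ → ℝ) : ℝ := ∫ t in (0:ℝ)..1, |g t|

/-- The L^{2/3} quasi-norm on (0,1): (∫₀¹ |g|^{2/3})^{3/2}. -/
def Lp23 (g : ℝ → ℝ) : ℝ := (∫ t in (0:ℝ)..1, |g t| ^ ((2:ℝ)/3)) ^ ((3:ℝ)/2)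

/-- L^∞ norm (essential supremum of |g|) on (0,1). -/
def Linf (g : ℝ → ℝ) : ℝ := essSup (fun t => |g t|) (volume.restrict (Set.Ioo (0:ℝ) 1))

/-- Membership in L²(0,1). -/
def MemL2 (g : ℝ → ℝ) : Prop :=
  Measurable g ∧ IntervalIntegrable (fun t => (g t)^2) volume 0 1

/-- Membership in L^∞(0,1). -/
def MemLinf (g : ℝ → ℝ) : Prop :=
  Measurable g ∧ ∃ M : ℝ, ∀ᵐ x ∂(volume.restrict (Set.Ioo (0:ℝ) 1)), |g x| ≤ M

/-- `g` is absolutely continuous on [0,1] with derivative `g' ∈ L¹(0,1)`. -/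
def HasL1Deriv (g g' : ℝ → ℝ) : Prop :=
  Measurable g' ∧ IntervalIntegrable g' volume 0 1 ∧
    ∀ x ∈ Set.Icc (0:ℝ) 1, g x = g 0 + ∫ t in (0:ℝ)..x, g' t

/-- A function in H¹(0,1): absolutely continuous on [0,1], carried together with its
(a.e.) derivative, which lies in L²(0,1). -/
structure H1 where
  val : ℝ → ℝ
  dval : ℝ → ℝ
  dval_meas : Measurable dval
  dval_int : IntervalIntegrable dval volume 0 1
  dval_sq_int : IntervalIntegrable (fun t => (dval t)^2) volume 0 1
  ftc : ∀ x ∈ Set.Icc (0:ℝ) 1, val x = val 0 + ∫ t in (0:ℝ)..x, dval t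

/-- `u ∈ H²(0,1)`: the derivative `u'` is absolutely continuous with `u'' ∈ L²(0,1)`. -/
def H1.IsH2 (u : H1) : Prop :=
  ∃ u'' : ℝ → ℝ, Measurable u'' ∧ IntervalIntegrable u'' volume 0 1 ∧
    IntervalIntegrable (fun t => (u'' t)^2) volume 0 1 ∧
    ∀ x ∈ Set.Icc (0:ℝ) 1, u.dval x = u.dval 0 + ∫ t in (0:ℝ)..x, u'' t

/-- The coefficients of the elliptic problem on Ω = (0,1):
`a, b ∈ W^{1,∞}(Ω)`, `c ∈ L^∞(Ω)`, `a ≥ a₀ > 0`, and `c − b'/2 ≥ 0` a.e. -/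
structure Coeffs where
  a : ℝ → ℝ
  b : ℝ → ℝ
  c : ℝ → ℝ
  a' : ℝ → ℝ
  b' : ℝ → ℝ
  a0 : ℝ
  a0_pos : 0 < a0
  a_lb : ∀ x ∈ Set.Icc (0:ℝ) 1, a0 ≤ a x
  a'_meas : Measurable a'
  b'_meas : Measurable b'
  c_meas : Measurable c
  a'_int : IntervalIntegrable a' volume 0 1
  b'_int : IntervalIntegrable b' volume 0 1
  a'_bdd : ∃ M : ℝ, ∀ᵐ x ∂(volume.restrict (Set.Ioo (0:ℝ) 1)), |a' x| ≤ M
  b'_bdd : ∃ M : ℝ, ∀ᵐ x ∂(volume.restrict (Set.Ioo (0:ℝ) 1)), |b' x| ≤ M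
  c_bdd : ∃ M : ℝ, ∀ᵐ x ∂(volume.restrict (Set.Ioo (0:ℝ) 1)), |c x| ≤ M
  ftc_a : ∀ x ∈ Set.Icc (0:ℝ) 1, a x = a 0 + ∫ t in (0:ℝ)..x, a' t
  ftc_b : ∀ x ∈ Set.Icc (0:ℝ) 1, b x = b 0 + ∫ t in (0:ℝ)..x, b' t
  cb_nonneg : ∀ᵐ x ∂(volume.restrict (Set.Ioo (0:ℝ) 1)), 0 ≤ c x - b' x / 2

/-- The bilinear form B(u,v) = ∫₀¹ (a u' v' + b u' v + c u v) dx. -/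
def Coeffs.B (P : Coeffs) (u v : H1) : ℝ :=
  ∫ t in (0:ℝ)..1,
    (P.a t * u.dval t * v.dval t + P.b t * u.dval t * v.val t + P.c t * u.val t * v.val t)

/-- The right-hand side functional (f, v) = ∫₀¹ f v dx. -/
def ip (f : ℝ → ℝ) (v : H1) : ℝ := ∫ t in (0:ℝ)..1, f t * v.val t

/-- `u ∈ H¹₀(Ω)` is the weak solution: B(u,v) = (f,v) for all v ∈ H¹₀(Ω). -/
def Coeffs.IsWeakSolution (P : Coeffs) (f : ℝ → ℝ) (u : H1) : Prop :=
  u.val 0 = 0 ∧ u.val 1 = 0 ∧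
    ∀ v : H1, v.val 0 = 0 → v.val 1 = 0 → P.B u v = ip f v

/-- A mesh of N elements of Ω = (0,1): 0 = x₀ < x₁ < ⋯ < x_N = 1. -/
structure Mesh (N : ℕ) where
  x : ℕ → ℝ
  x_zero : x 0 = 0
  x_last : x N = 1
  x_mono : ∀ i < N, x i < x (i+1)

/-- Element length (the element of index `i` is `(x i, x (i+1))`, `0 ≤ i < N`). -/
def Mesh.h {N : ℕ} (m : Mesh N) (i : ℕ) : ℝ := m.x (i+1) - m.x i

/-- `v` is piecewise linear with respect to the mesh: its derivative is constant
inside each element. -/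
def Mesh.IsPL {N : ℕ} (m : Mesh N) (v : H1) : Prop :=
  ∀ i < N, ∃ s : ℝ, ∀ t ∈ Set.Ioo (m.x i) (m.x (i+1)), v.dval t = s

/-- `uh` is the linear finite element solution on the mesh `m`:
a continuous piecewise linear function vanishing at 0 and 1 with
B(u_h, v_h) = (f, v_h) for all piecewise linear v_h vanishing at 0 and 1. -/
def Coeffs.IsFESolution (P : Coeffs) (f : ℝ → ℝ) {N : ℕ} (m : Mesh N) (uh : H1) : Prop :=
  uh.val 0 = 0 ∧ uh.val 1 = 0 ∧ m.IsPL uh ∧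
    ∀ v : H1, v.val 0 = 0 → v.val 1 = 0 → m.IsPL v → P.B uh v = ip f v

/-- The residual of `w`: r = f + a' w' − b w' − c w. -/
def Coeffs.res (P : Coeffs) (f : ℝ → ℝ) (w : H1) : ℝ → ℝ :=
  fun t => f t + P.a' t * w.dval t - P.b t * w.dval t - P.c t * w.val t

/-- The element L² average ⟨g⟩_i = (h_i⁻¹ ∫_{K_i} g²)^{1/2}. -/
def Mesh.avg {N : ℕ} (m : Mesh N) (g : ℝ → ℝ) (i : ℕ) : ℝ :=
  Real.sqrt ((1 / m.h i) * ∫ t in (m.x i)..(m.x (i+1)), (g t)^2)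

/-- The intensity parameter α_h = (Σ_i h_i ⟨g⟩_i^{2/3})³. -/
def Mesh.alpha {N : ℕ} (m : Mesh N) (g : ℝ → ℝ) : ℝ :=
  (∑ i ∈ Finset.range N, m.h i * (m.avg g i) ^ ((2:ℝ)/3)) ^ 3

/-- The adaptation function value ρ_i = (1 + α_h⁻¹ ⟨g⟩_i²)^{1/3}. -/
def Mesh.rho {N : ℕ} (m : Mesh N) (g : ℝ → ℝ) (i : ℕ) : ℝ :=
  (1 + (m.alpha g)⁻¹ * (m.avg g i)^2) ^ ((1:ℝ)/3)

/-- σ_h = Σ_i ρ_i h_i. -/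
def Mesh.sigma {N : ℕ} (m : Mesh N) (g : ℝ → ℝ) : ℝ :=
  ∑ i ∈ Finset.range N, m.rho g i * m.h i

/-- The mesh equidistributes (the piecewise constant adaptation function built from) `g`:
ρ_i h_i = σ_h / N for all elements. -/
def Mesh.IsEquidistributing {N : ℕ} (m : Mesh N) (g : ℝ → ℝ) : Prop :=
  ∀ i < N, m.rho g i * m.h i = m.sigma g / (N:ℝ)

/-- Membership in the mesh set S_N: 1/(ρ₀ N) ≤ h_i ≤ 2/N for all i. -/
def Mesh.InS {N : ℕ} (m : Mesh N) (ρ0 : ℝ) : Prop :=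
  ∀ i < N, 1 / (ρ0 * (N:ℝ)) ≤ m.h i ∧ m.h i ≤ 2 / (N:ℝ)

/-- The maximum norm distance ‖X − X̃‖_∞ between two meshes with the same N. -/
def meshDist {N : ℕ} (m m' : Mesh N) : ℝ :=
  (Finset.range (N+1)).sup' (Finset.nonempty_range_iff.mpr (Nat.succ_ne_zero N))
    (fun i => |m.x i - m'.x i|)

/-- The energy norm squared ‖v‖_E² = ∫₀¹ (a v'² + (c − b'/2) v²) dx. -/
def Coeffs.energySq (P : Coeffs) (v : H1) : ℝ :=
  ∫ t in (0:ℝ)..1, (P.a t * (v.dval t)^2 + (P.c t - P.b' t / 2) * (v.val t)^2)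

/-! ### Primitives of integrable functions on `[0,1]` -/

/-- `F` is absolutely continuous on `[0,1]` with integrable derivative `f`. -/
def IsPrimitive (F f : ℝ → ℝ) : Prop :=
  IntervalIntegrable f volume 0 1 ∧ ∀ x ∈ Set.Icc (0:ℝ) 1, F x = F 0 + ∫ t in (0:ℝ)..x, f t

lemma intervalIntegrable_subinterval {f : ℝ → ℝ} (h : IntervalIntegrable f volume 0 1) {p q : ℝ}
    (hp : p ∈ Set.Icc (0:ℝ) 1) (hq : q ∈ Set.Icc (0:ℝ) 1) : IntervalIntegrable f volume p q := by
  refine h.mono_set (Set.uIcc_subset_uIcc ?_ ?_) <;> rw [Set.uIcc_of_le zero_le_one] <;> assumption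

lemma intervalIntegrable_iff_restrict {f : ℝ → ℝ} :
    IntervalIntegrable f volume 0 1 ↔ Integrable f (volume.restrict (Set.Ioc (0:ℝ) 1)) :=
  intervalIntegrable_iff_integrableOn_Ioc_of_le zero_le_one

namespace IsPrimitive

variable {F G f g : ℝ → ℝ}

lemma integral_eq (h : IsPrimitive F f) {p q : ℝ}
    (hp : p ∈ Set.Icc (0:ℝ) 1) (hq : q ∈ Set.Icc (0:ℝ) 1) : ∫ t in p..q, f t = F q - F p := by
  have h0 : (0:ℝ) ∈ Set.Icc (0:ℝ) 1 := by simp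
  rw [h.2 p hp, h.2 q hq, ← intervalIntegral.integral_interval_sub_left
    (intervalIntegrable_subinterval h.1 h0 hq) (intervalIntegrable_subinterval h.1 h0 hp)]
  ring

lemma continuousOn (h : IsPrimitive F f) : ContinuousOn F (Set.Icc 0 1) := by
  have h1 : ContinuousOn (fun x => ∫ t in (0:ℝ)..x, f t) (Set.uIcc 0 1) :=
    intervalIntegral.continuousOn_primitive_interval' h.1 (by simp)
  rw [Set.uIcc_of_le zero_le_one] at h1
  exact (continuousOn_const.add h1).congr h.2

lemma exists_bound (h : IsPrimitive F f) : ∃ M, ∀ x ∈ Set.Icc (0:ℝ) 1, |F x| ≤ M :=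
  isCompact_Icc.exists_bound_of_continuousOn h.continuousOn

lemma memLp_top (h : IsPrimitive F f) : MemLp F ⊤ (volume.restrict (Set.Ioc (0:ℝ) 1)) := by
  obtain ⟨M, hM⟩ := h.exists_bound
  refine memLp_top_of_bound
    ((h.continuousOn.mono Set.Ioc_subset_Icc_self).aestronglyMeasurable measurableSet_Ioc) M ?_
  filter_upwards [self_mem_ae_restrict measurableSet_Ioc] with x hx
  exact hM x (Set.Ioc_subset_Icc_self hx)

lemma mul (hF : IsPrimitive F f) (hG : IsPrimitive G g) :
    IsPrimitive (fun t => F t * G t) (fun t => f t * G t + F t * g t) := by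
  have hU : Set.uIcc (0:ℝ) 1 = Set.Icc 0 1 := Set.uIcc_of_le zero_le_one
  have ac : ∀ {F f : ℝ → ℝ}, IsPrimitive F f →
      AbsolutelyContinuousOnInterval (fun x => F 0 + ∫ t in (0:ℝ)..x, f t) 0 1 := by
    intro F f h
    refine AbsolutelyContinuousOnInterval.add ?_
      (h.1.absolutelyContinuousOnInterval_intervalIntegral (by simp))
    exact (LipschitzWith.const (F 0)).lipschitzOnWith.absolutelyContinuousOnInterval
  refine ⟨(hF.1.mul_continuousOn (hU ▸ hG.continuousOn)).add
    (hG.1.continuousOn_mul (hU ▸ hF.continuousOn)), fun x hx => ?_⟩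
  have hsub : Set.uIcc 0 x ⊆ Set.uIcc 0 1 := by
    rw [hU, Set.uIcc_of_le hx.1]; exact Set.Icc_subset_Icc_right hx.2
  have key := (((ac hF).mul (ac hG)).mono hsub).integral_deriv_eq_sub
  have : ∫ t in (0:ℝ)..x, (f t * G t + F t * g t) = F x * G x - F 0 * G 0 := by
    rw [hF.2 x hx, hG.2 x hx]
    simp only [Pi.mul_apply, intervalIntegral.integral_same, add_zero] at key
    rw [← key]
    apply intervalIntegral.integral_congr_ae
    filter_upwards [hF.1.ae_hasDerivAt_integral, hG.1.ae_hasDerivAt_integral] with t h1 h2 ht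
    have ht' : t ∈ Set.uIcc (0:ℝ) 1 := hsub (Set.uIoc_subset_uIcc ht)
    have d1 := (h1 ht' 0 (by simp)).const_add (F 0)
    have d2 := (h2 ht' 0 (by simp)).const_add (G 0)
    rw [hF.2 t (hU ▸ ht'), hG.2 t (hU ▸ ht')]
    exact (d1.mul d2).deriv.symm
  linarith

lemma sub (hF : IsPrimitive F f) (hG : IsPrimitive G g) :
    IsPrimitive (fun t => F t - G t) (fun t => f t - g t) := by
  refine ⟨hF.1.sub hG.1, fun x hx => ?_⟩
  have h0 : (0:ℝ) ∈ Set.Icc (0:ℝ) 1 := by simp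
  rw [intervalIntegral.integral_sub (intervalIntegrable_subinterval hF.1 h0 hx)
    (intervalIntegrable_subinterval hG.1 h0 hx)]
  linear_combination hF.2 x hx - hG.2 x hx

end IsPrimitive

/-! ### Square-integrable functions -/

lemma memLp_two_of_measurable {g : ℝ → ℝ} (hm : Measurable g)
    (h : IntervalIntegrable (fun t => (g t)^2) volume 0 1) :
    MemLp g 2 (volume.restrict (Set.Ioc (0:ℝ) 1)) :=
  (memLp_two_iff_integrable_sq hm.aestronglyMeasurable).2 (intervalIntegrable_iff_restrict.1 h)

lemma memLp_top_of_ae_Ioo {g : ℝ → ℝ} (hm : Measurable g)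
    (h : ∃ M : ℝ, ∀ᵐ x ∂(volume.restrict (Set.Ioo (0:ℝ) 1)), |g x| ≤ M) :
    MemLp g ⊤ (volume.restrict (Set.Ioc (0:ℝ) 1)) := by
  obtain ⟨M, hM⟩ := h
  rw [restrict_Ioo_eq_restrict_Ioc] at hM
  exact memLp_top_of_bound hm.aestronglyMeasurable M hM

lemma intervalIntegrable_mul_of_memLp {f g : ℝ → ℝ}
    (hf : MemLp f 2 (volume.restrict (Set.Ioc (0:ℝ) 1)))
    (hg : MemLp g 2 (volume.restrict (Set.Ioc (0:ℝ) 1))) :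
    IntervalIntegrable (fun t => f t * g t) volume 0 1 :=
  intervalIntegrable_iff_restrict.2 (hf.integrable_mul hg)

lemma intervalIntegrable_sq_of_memLp {f : ℝ → ℝ}
    (hf : MemLp f 2 (volume.restrict (Set.Ioc (0:ℝ) 1))) :
    IntervalIntegrable (fun t => f t ^ 2) volume 0 1 :=
  intervalIntegrable_iff_restrict.2 hf.integrable_sq

lemma intervalIntegrable_of_memLp {f : ℝ → ℝ}
    (hf : MemLp f 2 (volume.restrict (Set.Ioc (0:ℝ) 1))) : IntervalIntegrable f volume 0 1 :=
  intervalIntegrable_iff_restrict.2 (hf.integrable one_le_two)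

lemma integral_sub_const_sq {g : ℝ → ℝ} {p q : ℝ} (hg : IntervalIntegrable g volume p q)
    (hg2 : IntervalIntegrable (fun t => g t ^ 2) volume p q) (c : ℝ) :
    ∫ t in p..q, (g t - c) ^ 2
      = (∫ t in p..q, g t ^ 2) - 2 * c * (∫ t in p..q, g t) + c ^ 2 * (q - p) := by
  have : ∀ t, (g t - c) ^ 2 = (g t ^ 2 - 2 * c * g t) + c ^ 2 := fun t => by ring
  simp only [this]
  rw [intervalIntegral.integral_add (hg2.sub (hg.const_mul _)) (by simp),
    intervalIntegral.integral_sub hg2 (hg.const_mul _), intervalIntegral.integral_const_mul,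
    intervalIntegral.integral_const, smul_eq_mul]
  ring

lemma sq_integral_le {g : ℝ → ℝ} {p q : ℝ} (hpq : p ≤ q) (hg : IntervalIntegrable g volume p q)
    (hg2 : IntervalIntegrable (fun t => g t ^ 2) volume p q) :
    (∫ t in p..q, g t) ^ 2 ≤ (q - p) * ∫ t in p..q, g t ^ 2 := by
  rcases hpq.eq_or_lt with rfl | hlt
  · simp
  have h := intervalIntegral.integral_nonneg (μ := volume) hpq
    (fun t _ => sq_nonneg (g t - (∫ t in p..q, g t) / (q - p)))
  rw [integral_sub_const_sq hg hg2] at h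
  have hd : 0 < q - p := sub_pos.2 hlt
  have := mul_nonneg hd.le h
  field_simp at this
  nlinarith

lemma integral_sub_mean_sq_le {g : ℝ → ℝ} {p q : ℝ} (hpq : p < q)
    (hg : IntervalIntegrable g volume p q)
    (hg2 : IntervalIntegrable (fun t => g t ^ 2) volume p q) :
    ∫ t in p..q, (g t - (∫ t in p..q, g t) / (q - p)) ^ 2 ≤ ∫ t in p..q, g t ^ 2 := by
  have hd : 0 < q - p := sub_pos.2 hpq
  rw [integral_sub_const_sq hg hg2]
  have : 0 ≤ (∫ t in p..q, g t) ^ 2 / (q - p) := by positivity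
  have h2 : 2 * ((∫ t in p..q, g t) / (q - p)) * (∫ t in p..q, g t)
      - ((∫ t in p..q, g t) / (q - p)) ^ 2 * (q - p) = (∫ t in p..q, g t) ^ 2 / (q - p) := by
    field_simp; ring
  linarith

lemma IsPrimitive.sq_sub_le {W w : ℝ → ℝ} (h : IsPrimitive W w)
    (hw : IntervalIntegrable (fun t => w t ^ 2) volume 0 1) {p q : ℝ}
    (hp : 0 ≤ p) (hq : q ≤ 1) {x : ℝ} (hx : x ∈ Set.Icc p q) :
    (W x - W p) ^ 2 ≤ (q - p) * ∫ t in p..q, w t ^ 2 := by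
  have hpI : p ∈ Set.Icc (0:ℝ) 1 := ⟨hp, hx.1.trans (hx.2.trans hq)⟩
  have hqI : q ∈ Set.Icc (0:ℝ) 1 := ⟨hp.trans (hx.1.trans hx.2), hq⟩
  have hxI : x ∈ Set.Icc (0:ℝ) 1 := ⟨hp.trans hx.1, hx.2.trans hq⟩
  rw [← h.integral_eq hpI hxI]
  refine (sq_integral_le hx.1 (intervalIntegrable_subinterval h.1 hpI hxI)
    (intervalIntegrable_subinterval hw hpI hxI)).trans ?_
  have h1 : ∫ t in p..x, w t ^ 2 ≤ ∫ t in p..q, w t ^ 2 :=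
    intervalIntegral.integral_mono_interval le_rfl hx.1 hx.2
      (Filter.Eventually.of_forall fun t => sq_nonneg _) (intervalIntegrable_subinterval hw hpI hqI)
  have h0 : 0 ≤ ∫ t in p..x, w t ^ 2 :=
    intervalIntegral.integral_nonneg hx.1 fun t _ => sq_nonneg _
  have := hx.1
  have := hx.2
  exact mul_le_mul (by linarith) h1 h0 (by linarith)

lemma IsPrimitive.integral_sq_le {W w : ℝ → ℝ} (h : IsPrimitive W w)
    (hw : IntervalIntegrable (fun t => w t ^ 2) volume 0 1) {p q : ℝ}
    (hp : 0 ≤ p) (hpq : p ≤ q) (hq : q ≤ 1) (hWp : W p = 0) :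
    ∫ t in p..q, W t ^ 2 ≤ (q - p) ^ 2 * ∫ t in p..q, w t ^ 2 := by
  have hc : ContinuousOn (fun t => W t ^ 2) (Set.uIcc p q) := by
    rw [Set.uIcc_of_le hpq]
    exact (h.continuousOn.mono (Set.Icc_subset_Icc hp hq)).pow 2
  have := intervalIntegral.integral_mono_on (μ := volume) hpq hc.intervalIntegrable
    (g := fun _ => (q - p) * ∫ t in p..q, w t ^ 2) (by simp) (fun x hx => by
      simpa [hWp] using h.sq_sub_le hw hp hq hx)
  simp only [intervalIntegral.integral_const, smul_eq_mul] at this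
  linarith

/-- Jensen's inequality for the concave function `s ↦ s ^ (1/3)` applied to `g ^ 2`. -/
lemma integral_abs_rpow_le {g : ℝ → ℝ} (hg : MemLp g 2 (volume.restrict (Set.Ioc (0:ℝ) 1)))
    {p q : ℝ} (hp : 0 ≤ p) (hpq : p < q) (hq : q ≤ 1) :
    IntervalIntegrable (fun t => |g t| ^ ((2:ℝ)/3)) volume p q ∧
    ∫ t in p..q, |g t| ^ ((2:ℝ)/3)
      ≤ (q - p) * √(1 / (q - p) * ∫ t in p..q, g t ^ 2) ^ ((2:ℝ)/3) := by
  have hd : 0 < q - p := sub_pos.2 hpq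
  have hpI : p ∈ Set.Icc (0:ℝ) 1 := ⟨hp, by linarith⟩
  have hqI : q ∈ Set.Icc (0:ℝ) 1 := ⟨by linarith, hq⟩
  have hsq := intervalIntegrable_subinterval (intervalIntegrable_sq_of_memLp hg) hpI hqI
  have hsqI := (intervalIntegrable_iff_integrableOn_Ioc_of_le hpq.le).1 hsq
  have hroot : ∀ y : ℝ, (y ^ 2) ^ ((1:ℝ)/3) = |y| ^ ((2:ℝ)/3) := fun y => by
    rw [← sq_abs, ← Real.rpow_natCast, ← Real.rpow_mul (abs_nonneg y)]; norm_num
  have hmeas : AEStronglyMeasurable (fun t => (g t ^ 2) ^ ((1:ℝ)/3))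
      (volume.restrict (Set.Ioc p q)) :=
    (hsqI.aemeasurable.pow_const _).aestronglyMeasurable
  have hint : Integrable (fun t => (g t ^ 2) ^ ((1:ℝ)/3)) (volume.restrict (Set.Ioc p q)) := by
    refine ((integrable_const (1:ℝ)).add hsqI).mono' hmeas (Filter.Eventually.of_forall fun t => ?_)
    rw [Real.norm_of_nonneg (by positivity)]
    have h0 : 0 ≤ g t ^ 2 := sq_nonneg _
    calc (g t ^ 2) ^ ((1:ℝ)/3) ≤ (1 + g t ^ 2) ^ ((1:ℝ)/3) := by gcongr; linarith
      _ ≤ (1 + g t ^ 2) ^ (1:ℝ) := Real.rpow_le_rpow_of_exponent_le (by linarith) (by norm_num)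
      _ = 1 + g t ^ 2 := Real.rpow_one _
  have : NeZero (volume.restrict (Set.Ioc p q)) := ⟨by
    rw [Ne, Measure.restrict_eq_zero, Real.volume_Ioc]
    simpa using hpq⟩
  have hj := (Real.concaveOn_rpow (p := (1:ℝ)/3) (by norm_num) (by norm_num)).le_map_average
    (μ := volume.restrict (Set.Ioc p q)) (f := fun t => g t ^ 2)
    (Real.continuous_rpow_const (by norm_num)).continuousOn isClosed_Ici
    (Filter.Eventually.of_forall fun t => sq_nonneg (g t)) hsqI hint
  simp only [hroot] at hj hint
  refine ⟨(intervalIntegrable_iff_integrableOn_Ioc_of_le hpq.le).2 hint, ?_⟩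
  rw [average_eq, average_eq] at hj
  simp only [measureReal_restrict_apply_univ, Real.volume_real_Ioc_of_le hpq.le, smul_eq_mul,
    ← intervalIntegral.integral_of_le hpq.le] at hj
  have h0 : 0 ≤ 1 / (q - p) * ∫ t in p..q, g t ^ 2 :=
    mul_nonneg (by positivity) (intervalIntegral.integral_nonneg hpq.le fun t _ => sq_nonneg _)
  rw [← abs_of_nonneg (Real.sqrt_nonneg _), ← hroot, Real.sq_sqrt h0, one_div, ← div_le_iff₀' hd,
    div_eq_inv_mul]
  simpa using hj

/-! ### The bilinear form on `H¹` -/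

namespace H1

lemma isPrimitive (u : H1) : IsPrimitive u.val u.dval := ⟨u.dval_int, u.ftc⟩

lemma memLp_dval (u : H1) : MemLp u.dval 2 (volume.restrict (Set.Ioc (0:ℝ) 1)) :=
  memLp_two_of_measurable u.dval_meas u.dval_sq_int

lemma memLp_val (u : H1) : MemLp u.val 2 (volume.restrict (Set.Ioc (0:ℝ) 1)) :=
  u.isPrimitive.memLp_top.mono_exponent le_top

/-- The difference of two functions in `H¹(0,1)`. -/
def sub (u v : H1) : H1 where
  val := fun t => u.val t - v.val t
  dval := fun t => u.dval t - v.dval t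
  dval_meas := u.dval_meas.sub v.dval_meas
  dval_int := u.dval_int.sub v.dval_int
  dval_sq_int := intervalIntegrable_sq_of_memLp (u.memLp_dval.sub v.memLp_dval)
  ftc := (u.isPrimitive.sub v.isPrimitive).2

end H1

namespace Coeffs

lemma isPrimitive_a (P : Coeffs) : IsPrimitive P.a P.a' := ⟨P.a'_int, P.ftc_a⟩

lemma isPrimitive_b (P : Coeffs) : IsPrimitive P.b P.b' := ⟨P.b'_int, P.ftc_b⟩

lemma memLp_c (P : Coeffs) : MemLp P.c ⊤ (volume.restrict (Set.Ioc (0:ℝ) 1)) :=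
  memLp_top_of_ae_Ioo P.c_meas P.c_bdd

lemma memLp_a' (P : Coeffs) : MemLp P.a' ⊤ (volume.restrict (Set.Ioc (0:ℝ) 1)) :=
  memLp_top_of_ae_Ioo P.a'_meas P.a'_bdd

lemma intervalIntegrable_B (P : Coeffs) (u v : H1) : IntervalIntegrable (fun t =>
    P.a t * u.dval t * v.dval t + P.b t * u.dval t * v.val t + P.c t * u.val t * v.val t)
    volume 0 1 :=
  ((intervalIntegrable_mul_of_memLp (u.memLp_dval.mul' P.isPrimitive_a.memLp_top)
    v.memLp_dval).add (intervalIntegrable_mul_of_memLp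
      (u.memLp_dval.mul' P.isPrimitive_b.memLp_top) v.memLp_val)).add
    (intervalIntegrable_mul_of_memLp (u.memLp_val.mul' P.memLp_c) v.memLp_val)

lemma B_sub_left (P : Coeffs) (u₁ u₂ v : H1) : P.B (u₁.sub u₂) v = P.B u₁ v - P.B u₂ v := by
  unfold B
  rw [← intervalIntegral.integral_sub (P.intervalIntegrable_B _ _) (P.intervalIntegrable_B _ _)]
  congr 1
  ext t
  simp only [H1.sub]
  ring

lemma B_sub_right (P : Coeffs) (u v₁ v₂ : H1) : P.B u (v₁.sub v₂) = P.B u v₁ - P.B u v₂ := by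
  unfold B
  rw [← intervalIntegral.integral_sub (P.intervalIntegrable_B _ _) (P.intervalIntegrable_B _ _)]
  congr 1
  ext t
  simp only [H1.sub]
  ring

lemma coercive (P : Coeffs) (v : H1) (h0 : v.val 0 = 0) (h1 : v.val 1 = 0) :
    P.a0 * ∫ t in (0:ℝ)..1, v.dval t ^ 2 ≤ P.B v v := by
  have hp := P.isPrimitive_b.mul (v.isPrimitive.mul v.isPrimitive)
  have hz := hp.integral_eq (p := 0) (q := 1) (by simp) (by simp)
  simp only [h0, h1, mul_zero, sub_zero] at hz
  have hB : P.B v v = (∫ t in (0:ℝ)..1, (P.a t * v.dval t * v.dval t + P.b t * v.dval t * v.val t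
      + P.c t * v.val t * v.val t)) - 1 / 2 * ∫ t in (0:ℝ)..1,
      (P.b' t * (v.val t * v.val t) + P.b t * (v.dval t * v.val t + v.val t * v.dval t)) := by
    rw [hz, mul_zero, sub_zero]; rfl
  rw [hB, ← intervalIntegral.integral_const_mul, ← intervalIntegral.integral_const_mul,
    ← intervalIntegral.integral_sub (P.intervalIntegrable_B v v) (hp.1.const_mul _)]
  refine intervalIntegral.integral_mono_ae_restrict zero_le_one (v.dval_sq_int.const_mul _)
    ((P.intervalIntegrable_B v v).sub (hp.1.const_mul _)) ?_
  have hcb := P.cb_nonneg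
  rw [restrict_Ioo_eq_restrict_Ioc, restrict_Ioc_eq_restrict_Icc] at hcb
  filter_upwards [hcb, self_mem_ae_restrict measurableSet_Icc] with t ht htI
  have := mul_nonneg (sub_nonneg.2 (P.a_lb t htI)) (sq_nonneg (v.dval t))
  have := mul_nonneg ht (sq_nonneg (v.val t))
  linarith

lemma memLp_res (P : Coeffs) {f : ℝ → ℝ} (hf : MemL2 f) (w : H1) :
    MemLp (P.res f w) 2 (volume.restrict (Set.Ioc (0:ℝ) 1)) :=
  (((memLp_two_of_measurable hf.1 hf.2).add (w.memLp_dval.mul' P.memLp_a')).sub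
    (w.memLp_dval.mul' P.isPrimitive_b.memLp_top)).sub (w.memLp_val.mul' P.memLp_c)

/-- The residual depends on the function in a Lipschitz way, with a constant depending only on
the coefficients. -/
lemma exists_integral_res_sub_sq_le (P : Coeffs) : ∃ K : ℝ, 0 ≤ K ∧
    ∀ (f : ℝ → ℝ) (u v : H1), u.val 0 = 0 → v.val 0 = 0 →
      ∫ t in (0:ℝ)..1, (P.res f u t - P.res f v t) ^ 2
        ≤ K ^ 2 * ∫ t in (0:ℝ)..1, (u.sub v).dval t ^ 2 := by
  obtain ⟨A, hA⟩ := P.a'_bdd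
  obtain ⟨D, hD⟩ := P.c_bdd
  obtain ⟨E, hE⟩ := P.isPrimitive_b.exists_bound
  refine ⟨2 * (|A| + |E| + |D|), by positivity, fun f u v hu hv => ?_⟩
  set e := u.sub v with he
  set S := ∫ t in (0:ℝ)..1, e.dval t ^ 2 with hS
  have hS0 : 0 ≤ S := intervalIntegral.integral_nonneg zero_le_one fun t _ => sq_nonneg _
  have he0 : e.val 0 = 0 := by simp [he, H1.sub, hu, hv]
  have hmem : MemLp (fun t => P.a' t * e.dval t - P.b t * e.dval t - P.c t * e.val t) 2
      (volume.restrict (Set.Ioc (0:ℝ) 1)) :=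
    ((e.memLp_dval.mul' P.memLp_a').sub (e.memLp_dval.mul' P.isPrimitive_b.memLp_top)).sub
      (e.memLp_val.mul' P.memLp_c)
  have hres : ∀ t, P.res f u t - P.res f v t
      = P.a' t * e.dval t - P.b t * e.dval t - P.c t * e.val t := fun t => by
    simp only [res, he, H1.sub]; ring
  simp only [hres]
  have hmono : ∫ t in (0:ℝ)..1, (P.a' t * e.dval t - P.b t * e.dval t - P.c t * e.val t) ^ 2
      ≤ ∫ t in (0:ℝ)..1, (2 * (|A| + |E|) ^ 2 * e.dval t ^ 2 + 2 * |D| ^ 2 * S) := by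
    refine intervalIntegral.integral_mono_ae_restrict zero_le_one
      (intervalIntegrable_sq_of_memLp hmem) ((e.dval_sq_int.const_mul _).add (by simp)) ?_
    rw [restrict_Ioo_eq_restrict_Ioc, restrict_Ioc_eq_restrict_Icc] at hA hD
    filter_upwards [hA, hD, self_mem_ae_restrict measurableSet_Icc] with t h1 h2 htI
    have h3 := hE t htI
    have h4 : e.val t ^ 2 ≤ S := by
      simpa [he0] using e.isPrimitive.sq_sub_le e.dval_sq_int le_rfl le_rfl htI
    have h5 : (P.a' t - P.b t) ^ 2 ≤ (|A| + |E|) ^ 2 := by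
      rw [← sq_abs (P.a' t - P.b t)]
      have := abs_sub (P.a' t) (P.b t)
      have := le_abs_self A
      have := le_abs_self E
      gcongr
      linarith
    have h6 : P.c t ^ 2 ≤ |D| ^ 2 := by
      rw [← sq_abs (P.c t)]
      exact pow_le_pow_left₀ (abs_nonneg _) (h2.trans (le_abs_self D)) 2
    have h7 := mul_le_mul_of_nonneg_right h5 (sq_nonneg (e.dval t))
    have h8 := mul_le_mul h6 h4 (sq_nonneg _) (by positivity)
    nlinarith [sq_nonneg ((P.a' t - P.b t) * e.dval t + P.c t * e.val t)]
  refine hmono.trans ?_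
  rw [intervalIntegral.integral_add (e.dval_sq_int.const_mul _) (by simp),
    intervalIntegral.integral_const_mul, intervalIntegral.integral_const, ← hS]
  simp only [sub_zero, one_smul]
  have : 2 * (|A| + |E|) ^ 2 + 2 * |D| ^ 2 ≤ (2 * (|A| + |E| + |D|)) ^ 2 := by
    nlinarith [abs_nonneg A, abs_nonneg E, abs_nonneg D,
      mul_nonneg (add_nonneg (abs_nonneg A) (abs_nonneg E)) (abs_nonneg D)]
  nlinarith

end Coeffs

/-! ### Nodal interpolation and the a posteriori error estimate -/

namespace Mesh

variable {N : ℕ} (m : Mesh N)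

lemma h_pos {i : ℕ} (hi : i < N) : 0 < m.h i := sub_pos.2 (m.x_mono i hi)

lemma x_le {i j : ℕ} (hij : i ≤ j) (hj : j ≤ N) : m.x i ≤ m.x j := by
  induction j, hij using Nat.le_induction with
  | base => exact le_rfl
  | succ k _ ih => exact (ih (by omega)).trans (m.x_mono k (by omega)).le

lemma x_mem {i : ℕ} (hi : i ≤ N) : m.x i ∈ Set.Icc (0:ℝ) 1 :=
  ⟨m.x_zero ▸ m.x_le (Nat.zero_le i) hi, m.x_last ▸ m.x_le hi le_rfl⟩

lemma sum_h : ∑ i ∈ Finset.range N, m.h i = 1 := by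
  simp only [h]
  rw [Finset.sum_range_sub, m.x_zero, m.x_last, sub_zero]

lemma sum_integral {g : ℝ → ℝ} (hg : IntervalIntegrable g volume 0 1) :
    ∑ i ∈ Finset.range N, ∫ t in (m.x i)..(m.x (i+1)), g t = ∫ t in (0:ℝ)..1, g t := by
  rw [intervalIntegral.sum_integral_adjacent_intervals fun k hk =>
    intervalIntegrable_subinterval hg (m.x_mem hk.le) (m.x_mem hk), m.x_zero, m.x_last]

/-- The derivative of the piecewise linear nodal interpolant of `v`. -/
def interpDeriv (v : ℝ → ℝ) (t : ℝ) : ℝ :=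
  ∑ i ∈ Finset.range N,
    (Set.Ioc (m.x i) (m.x (i+1))).indicator (fun _ => (v (m.x (i+1)) - v (m.x i)) / m.h i) t

lemma measurable_interpDeriv (v : ℝ → ℝ) : Measurable (m.interpDeriv v) := by
  unfold interpDeriv
  exact Finset.measurable_fun_sum _ fun i _ => measurable_const.indicator measurableSet_Ioc

lemma memLp_interpDeriv (v : ℝ → ℝ) :
    MemLp (m.interpDeriv v) 2 (volume.restrict (Set.Ioc (0:ℝ) 1)) := by
  unfold interpDeriv
  exact memLp_finsetSum _ fun i _ => (memLp_const _).indicator measurableSet_Ioc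

lemma interpDeriv_eq (v : ℝ → ℝ) {i : ℕ} (hi : i < N) {t : ℝ}
    (ht : t ∈ Set.Ioc (m.x i) (m.x (i+1))) :
    m.interpDeriv v t = (v (m.x (i+1)) - v (m.x i)) / m.h i := by
  unfold interpDeriv
  rw [Finset.sum_eq_single_of_mem i (Finset.mem_range.2 hi), Set.indicator_of_mem ht]
  intro j hj hji
  have hj := Finset.mem_range.1 hj
  refine Set.indicator_of_notMem (fun htj => ?_) _
  rcases lt_or_gt_of_ne hji with hlt | hlt
  · exact absurd (htj.2.trans (m.x_le hlt hi.le)) (not_le.2 ht.1)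
  · exact absurd (ht.2.trans (m.x_le hlt hj.le)) (not_le.2 htj.1)

/-- The piecewise linear nodal interpolant. -/
def interp (v : H1) : H1 where
  val := fun x => v.val 0 + ∫ t in (0:ℝ)..x, m.interpDeriv v.val t
  dval := m.interpDeriv v.val
  dval_meas := m.measurable_interpDeriv v.val
  dval_int := intervalIntegrable_of_memLp (m.memLp_interpDeriv v.val)
  dval_sq_int := intervalIntegrable_sq_of_memLp (m.memLp_interpDeriv v.val)
  ftc := fun x _ => by simp

lemma isPL_interp (v : H1) : m.IsPL (m.interp v) := fun _ hi =>
  ⟨_, fun _ ht => m.interpDeriv_eq v.val hi (Set.Ioo_subset_Ioc_self ht)⟩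

lemma interp_val_node (v : H1) {i : ℕ} (hi : i ≤ N) : (m.interp v).val (m.x i) = v.val (m.x i) := by
  induction i with
  | zero => simp [interp, m.x_zero]
  | succ k ih =>
    have hk : k < N := hi
    have h1 := (m.interp v).isPrimitive.integral_eq (m.x_mem hk.le) (m.x_mem hi)
    have h2 : ∫ t in (m.x k)..(m.x (k+1)), (m.interp v).dval t
        = ∫ _ in (m.x k)..(m.x (k+1)), (v.val (m.x (k+1)) - v.val (m.x k)) / m.h k := by
      refine intervalIntegral.integral_congr_ae (Filter.Eventually.of_forall fun t ht => ?_)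
      rw [Set.uIoc_of_le (m.x_mono k hk).le] at ht
      exact m.interpDeriv_eq v.val hk ht
    have h3 : m.x (k+1) - m.x k ≠ 0 := (m.h_pos hk).ne'
    rw [h2, intervalIntegral.integral_const, smul_eq_mul, h, mul_div_cancel₀ _ h3, ih hk.le] at h1
    linarith

end Mesh

lemma intervalIntegral_congr_Ioo {f g : ℝ → ℝ} {p q : ℝ} (hpq : p ≤ q)
    (h : ∀ t ∈ Set.Ioo p q, f t = g t) : ∫ t in p..q, f t = ∫ t in p..q, g t := by
  rw [intervalIntegral.integral_of_le hpq, intervalIntegral.integral_of_le hpq,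
    integral_Ioc_eq_integral_Ioo, integral_Ioc_eq_integral_Ioo]
  exact setIntegral_congr_fun measurableSet_Ioo h

namespace Coeffs

variable {N : ℕ} (m : Mesh N)

/-- Elementwise integration by parts: tested with functions vanishing at the nodes, the weak
residual of a piecewise linear function is its strong residual. -/
lemma ip_sub_B_eq_integral_res (P : Coeffs) {f : ℝ → ℝ} (hf : MemL2 f) {z : H1} (hz : m.IsPL z)
    {v : H1} (hv : ∀ i ≤ N, v.val (m.x i) = 0) :
    ip f v - P.B z v = ∫ t in (0:ℝ)..1, P.res f z t * v.val t := by
  have hI1 : IntervalIntegrable (fun t => P.a t * z.dval t * v.dval t) volume 0 1 :=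
    intervalIntegrable_mul_of_memLp (z.memLp_dval.mul' P.isPrimitive_a.memLp_top) v.memLp_dval
  have hI2 : IntervalIntegrable (fun t => P.a' t * z.dval t * v.val t) volume 0 1 :=
    intervalIntegrable_mul_of_memLp (z.memLp_dval.mul' P.memLp_a') v.memLp_val
  have hIf : IntervalIntegrable (fun t => f t * v.val t) volume 0 1 :=
    intervalIntegrable_mul_of_memLp (memLp_two_of_measurable hf.1 hf.2) v.memLp_val
  have hIr : IntervalIntegrable (fun t => P.res f z t * v.val t) volume 0 1 :=
    intervalIntegrable_mul_of_memLp (P.memLp_res hf z) v.memLp_val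
  have hzero : ∫ t in (0:ℝ)..1,
      (P.a t * z.dval t * v.dval t + P.a' t * z.dval t * v.val t) = 0 := by
    rw [← m.sum_integral (hI1.add hI2)]
    refine Finset.sum_eq_zero fun i hi => ?_
    have hi := Finset.mem_range.1 hi
    obtain ⟨s, hs⟩ := hz i hi
    have hav := (P.isPrimitive_a.mul v.isPrimitive).integral_eq (m.x_mem hi.le) (m.x_mem hi)
    rw [hv i hi.le, hv (i+1) hi, mul_zero, mul_zero, sub_zero] at hav
    rw [intervalIntegral_congr_Ioo (m.x_mono i hi).le
      (g := fun t => s * (P.a' t * v.val t + P.a t * v.dval t)) fun t ht => ?_,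
      intervalIntegral.integral_const_mul, hav, mul_zero]
    rw [hs t ht]; ring
  have hsplit : ∫ t in (0:ℝ)..1, (P.a t * z.dval t * v.dval t + P.a' t * z.dval t * v.val t)
      = ∫ t in (0:ℝ)..1, ((P.a t * z.dval t * v.dval t + P.b t * z.dval t * v.val t
        + P.c t * z.val t * v.val t) - f t * v.val t + P.res f z t * v.val t) := by
    congr 1
    ext t
    simp only [res]
    ring
  rw [hsplit, intervalIntegral.integral_add ((P.intervalIntegrable_B z v).sub hIf) hIr,
    intervalIntegral.integral_sub (P.intervalIntegrable_B z v) hIf] at hzero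
  simp only [ip, B]
  linarith

/-- The a posteriori error estimate in terms of the element residuals. -/
lemma error_le_residual (P : Coeffs) {f : ℝ → ℝ} (hf : MemL2 f) {u uh : H1}
    (hu : P.IsWeakSolution f u) (huh : P.IsFESolution f m uh) :
    P.a0 ^ 2 * ∫ t in (0:ℝ)..1, (u.sub uh).dval t ^ 2
      ≤ ∑ i ∈ Finset.range N,
          m.h i ^ 2 * ∫ t in (m.x i)..(m.x (i+1)), P.res f uh t ^ 2 := by
  have ha := P.a0_pos
  set e := u.sub uh with he
  have he0 : e.val 0 = 0 := by simp [he, H1.sub, hu.1, huh.1]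
  have he1 : e.val 1 = 0 := by simp [he, H1.sub, hu.2.1, huh.2.1]
  set z := m.interp e with hz
  have hz0 : z.val 0 = 0 := by
    have := m.interp_val_node e (Nat.zero_le N); rwa [m.x_zero, he0] at this
  have hz1 : z.val 1 = 0 := by
    have := m.interp_val_node e le_rfl; rwa [m.x_last, he1] at this
  set w := e.sub z with hw
  have hw0 : w.val 0 = 0 := by simp [hw, H1.sub, he0, hz0]
  have hw1 : w.val 1 = 0 := by simp [hw, H1.sub, he1, hz1]
  have hwn : ∀ i ≤ N, w.val (m.x i) = 0 := fun i hi => sub_eq_zero.2 (m.interp_val_node e hi).symm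
  have hrep : P.B e e = ∫ t in (0:ℝ)..1, P.res f uh t * w.val t := by
    have h1 : P.B e z = 0 := by
      rw [he, B_sub_left, hu.2.2 z hz0 hz1, huh.2.2.2 z hz0 hz1 (m.isPL_interp e), sub_self]
    have h2 := P.B_sub_right e e z
    rw [h1, sub_zero, ← hw] at h2
    rw [← h2, he, B_sub_left, hu.2.2 w hw0 hw1,
      ← P.ip_sub_B_eq_integral_res m hf huh.2.2.1 hwn]
  have hI : IntervalIntegrable (fun t => P.res f uh t * w.val t) volume 0 1 :=
    intervalIntegrable_mul_of_memLp (P.memLp_res hf uh) w.memLp_val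
  have hr2 := intervalIntegrable_sq_of_memLp (P.memLp_res hf uh)
  have hw2 := intervalIntegrable_sq_of_memLp w.memLp_val
  have helem : ∀ i ∈ Finset.range N, ∫ t in (m.x i)..(m.x (i+1)), P.res f uh t * w.val t
      ≤ 1 / (2 * P.a0) * (m.h i ^ 2 * ∫ t in (m.x i)..(m.x (i+1)), P.res f uh t ^ 2)
        + P.a0 / 2 * ∫ t in (m.x i)..(m.x (i+1)), e.dval t ^ 2 := by
    intro i hi
    have hi := Finset.mem_range.1 hi
    have hle := (m.x_mono i hi).le
    have hh := m.h_pos hi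
    have hp := m.x_mem hi.le
    have hq := m.x_mem (i := i+1) hi
    have hsub : ∀ {g : ℝ → ℝ}, IntervalIntegrable g volume 0 1 →
      IntervalIntegrable g volume (m.x i) (m.x (i+1)) :=
      fun hg => intervalIntegrable_subinterval hg hp hq
    have h1 : ∫ t in (m.x i)..(m.x (i+1)), P.res f uh t * w.val t
        ≤ ∫ t in (m.x i)..(m.x (i+1)), (m.h i ^ 2 / (2 * P.a0) * P.res f uh t ^ 2
          + P.a0 / (2 * m.h i ^ 2) * w.val t ^ 2) := by
      refine intervalIntegral.integral_mono_on hle (hsub hI)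
        (((hsub hr2).const_mul _).add ((hsub hw2).const_mul _)) fun t _ => ?_
      have : m.h i ^ 2 / (2 * P.a0) * P.res f uh t ^ 2 + P.a0 / (2 * m.h i ^ 2) * w.val t ^ 2
          - P.res f uh t * w.val t
          = (m.h i ^ 2 * P.res f uh t - P.a0 * w.val t) ^ 2 / (2 * P.a0 * m.h i ^ 2) := by
        field_simp; ring
      have h0 : 0 ≤ (m.h i ^ 2 * P.res f uh t - P.a0 * w.val t) ^ 2 / (2 * P.a0 * m.h i ^ 2) := by
        positivity
      linarith
    rw [intervalIntegral.integral_add ((hsub hr2).const_mul _) ((hsub hw2).const_mul _),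
      intervalIntegral.integral_const_mul, intervalIntegral.integral_const_mul] at h1
    have h2 : ∫ t in (m.x i)..(m.x (i+1)), w.val t ^ 2
        ≤ m.h i ^ 2 * ∫ t in (m.x i)..(m.x (i+1)), w.dval t ^ 2 :=
      w.isPrimitive.integral_sq_le w.dval_sq_int hp.1 hle hq.2 (hwn i hi.le)
    have h3 : ∫ t in (m.x i)..(m.x (i+1)), w.dval t ^ 2
        ≤ ∫ t in (m.x i)..(m.x (i+1)), e.dval t ^ 2 := by
      refine le_trans (le_of_eq ?_) (integral_sub_mean_sq_le (m.x_mono i hi)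
        (hsub e.dval_int) (hsub e.dval_sq_int))
      refine intervalIntegral_congr_Ioo hle fun t ht => ?_
      rw [e.isPrimitive.integral_eq hp hq]
      simp only [hw, hz, H1.sub, Mesh.interp,
        m.interpDeriv_eq _ hi (Set.Ioo_subset_Ioc_self ht), Mesh.h]
    have h4 : P.a0 / (2 * m.h i ^ 2) * ∫ t in (m.x i)..(m.x (i+1)), w.val t ^ 2
        ≤ P.a0 / (2 * m.h i ^ 2) * (m.h i ^ 2 * ∫ t in (m.x i)..(m.x (i+1)), e.dval t ^ 2) := by
      refine mul_le_mul_of_nonneg_left (h2.trans ?_) (by positivity)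
      exact mul_le_mul_of_nonneg_left h3 (by positivity)
    have h5 : P.a0 / (2 * m.h i ^ 2) * (m.h i ^ 2 * ∫ t in (m.x i)..(m.x (i+1)), e.dval t ^ 2)
        = P.a0 / 2 * ∫ t in (m.x i)..(m.x (i+1)), e.dval t ^ 2 := by field_simp
    have h6 : m.h i ^ 2 / (2 * P.a0) * ∫ t in (m.x i)..(m.x (i+1)), P.res f uh t ^ 2
        = 1 / (2 * P.a0) * (m.h i ^ 2 * ∫ t in (m.x i)..(m.x (i+1)), P.res f uh t ^ 2) := by
      ring
    linarith
  have hsum := Finset.sum_le_sum helem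
  rw [m.sum_integral hI, ← hrep, Finset.sum_add_distrib, ← Finset.mul_sum, ← Finset.mul_sum,
    m.sum_integral e.dval_sq_int] at hsum
  have hco := P.coercive e he0 he1
  have hfin : P.a0 * (∫ t in (0:ℝ)..1, e.dval t ^ 2) ≤ 1 / P.a0 * ∑ i ∈ Finset.range N,
      m.h i ^ 2 * ∫ t in (m.x i)..(m.x (i+1)), P.res f uh t ^ 2 := by
    have : 1 / P.a0 = 2 * (1 / (2 * P.a0)) := by field_simp
    rw [this, mul_assoc]
    linarith
  have := mul_le_mul_of_nonneg_left hfin ha.le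
  rw [← mul_assoc, ← mul_assoc, mul_one_div_cancel ha.ne', one_mul] at this
  rwa [sq]

end Coeffs

/-! ### Equidistributing meshes -/

lemma sq_rpow_third (y : ℝ) : (y ^ 2) ^ ((1:ℝ)/3) = |y| ^ ((2:ℝ)/3) := by
  rw [← sq_abs, ← Real.rpow_natCast, ← Real.rpow_mul (abs_nonneg y)]; norm_num

lemma cube_rpow_third {y : ℝ} (hy : 0 ≤ y) : (y ^ 3) ^ ((1:ℝ)/3) = y := by
  rw [← Real.rpow_natCast, ← Real.rpow_mul hy]; norm_num

lemma rpow_two_thirds_cube {y : ℝ} (hy : 0 ≤ y) : (y ^ ((2:ℝ)/3)) ^ 3 = y ^ 2 := by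
  rw [← Real.rpow_natCast, ← Real.rpow_mul hy, ← Real.rpow_natCast]; norm_num

namespace Mesh

variable {N : ℕ} (m : Mesh N) (g : ℝ → ℝ)

/-- The cube root of the intensity parameter. -/
def beta : ℝ := ∑ i ∈ Finset.range N, m.h i * (m.avg g i) ^ ((2:ℝ)/3)

lemma alpha_eq : m.alpha g = m.beta g ^ 3 := rfl

lemma avg_nonneg (i : ℕ) : 0 ≤ m.avg g i := Real.sqrt_nonneg _

lemma avg_sq {i : ℕ} (hi : i < N) :
    m.avg g i ^ 2 = 1 / m.h i * ∫ t in (m.x i)..(m.x (i+1)), g t ^ 2 :=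
  Real.sq_sqrt (mul_nonneg (one_div_nonneg.2 (m.h_pos hi).le)
    (intervalIntegral.integral_nonneg (m.x_mono i hi).le fun _ _ => sq_nonneg _))

lemma term_nonneg {i : ℕ} (hi : i < N) : 0 ≤ m.h i * m.avg g i ^ ((2:ℝ)/3) :=
  mul_nonneg (m.h_pos hi).le (Real.rpow_nonneg (m.avg_nonneg g i) _)

lemma beta_nonneg : 0 ≤ m.beta g :=
  Finset.sum_nonneg fun _ hi => m.term_nonneg g (Finset.mem_range.1 hi)

lemma rpow_third_eq (i : ℕ) :
    ((m.alpha g)⁻¹ * m.avg g i ^ 2) ^ ((1:ℝ)/3) = (m.beta g)⁻¹ * m.avg g i ^ ((2:ℝ)/3) := by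
  rw [alpha_eq, Real.mul_rpow (inv_nonneg.2 (pow_nonneg (m.beta_nonneg g) 3)) (sq_nonneg _),
    ← inv_pow, cube_rpow_third (inv_nonneg.2 (m.beta_nonneg g)), sq_rpow_third,
    abs_of_nonneg (m.avg_nonneg g i)]

lemma inv_alpha_mul_nonneg (i : ℕ) : 0 ≤ (m.alpha g)⁻¹ * m.avg g i ^ 2 :=
  mul_nonneg (inv_nonneg.2 (pow_nonneg (m.beta_nonneg g) 3)) (sq_nonneg _)

lemma one_le_rho (i : ℕ) : 1 ≤ m.rho g i :=
  Real.one_le_rpow (by linarith [m.inv_alpha_mul_nonneg g i]) (by norm_num)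

lemma le_rho (i : ℕ) : (m.beta g)⁻¹ * m.avg g i ^ ((2:ℝ)/3) ≤ m.rho g i := by
  rw [← rpow_third_eq]
  exact Real.rpow_le_rpow (m.inv_alpha_mul_nonneg g i) (by linarith) (by norm_num)

lemma rho_le (i : ℕ) : m.rho g i ≤ 1 + (m.beta g)⁻¹ * m.avg g i ^ ((2:ℝ)/3) := by
  rw [← rpow_third_eq]
  have := Real.rpow_add_le_add_rpow zero_le_one (m.inv_alpha_mul_nonneg g i)
    (p := (1:ℝ)/3) (by norm_num) (by norm_num)
  rwa [Real.one_rpow] at this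

lemma sigma_le_two : m.sigma g ≤ 2 := by
  have h1 : m.sigma g ≤ ∑ i ∈ Finset.range N,
      (m.h i + (m.beta g)⁻¹ * (m.h i * m.avg g i ^ ((2:ℝ)/3))) := by
    refine Finset.sum_le_sum fun i hi => ?_
    have := mul_le_mul_of_nonneg_right (m.rho_le g i) (m.h_pos (Finset.mem_range.1 hi)).le
    linarith
  rw [Finset.sum_add_distrib, ← Finset.mul_sum, m.sum_h] at h1
  have h2 : (m.beta g)⁻¹ * m.beta g ≤ 1 := inv_mul_le_one
  unfold beta at h1 h2
  linarith

variable {m g}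

lemma IsEquidistributing.rho_mul_h_le (hE : m.IsEquidistributing g) {i : ℕ} (hi : i < N) :
    m.rho g i * m.h i ≤ 2 / N := by
  rw [hE i hi]
  exact div_le_div_of_nonneg_right (m.sigma_le_two g) (Nat.cast_nonneg N)

lemma IsEquidistributing.h_le (hE : m.IsEquidistributing g) {i : ℕ} (hi : i < N) :
    m.h i ≤ 2 / N :=
  (le_mul_of_one_le_left (m.h_pos hi).le (m.one_le_rho g i)).trans (hE.rho_mul_h_le hi)

lemma IsEquidistributing.term_le (hE : m.IsEquidistributing g) {i : ℕ} (hi : i < N) :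
    m.h i * m.avg g i ^ ((2:ℝ)/3) ≤ 2 / N * m.beta g := by
  rcases (m.beta_nonneg g).eq_or_lt with h0 | h0
  · rw [← h0, mul_zero]
    unfold beta at h0
    exact h0 ▸ Finset.single_le_sum (f := fun i => m.h i * m.avg g i ^ ((2:ℝ)/3))
      (fun j hj => m.term_nonneg g (Finset.mem_range.1 hj)) (Finset.mem_range.2 hi)
  · have h1 := (mul_le_mul_of_nonneg_right (m.le_rho g i) (m.h_pos hi).le).trans
      (hE.rho_mul_h_le hi)
    calc m.h i * m.avg g i ^ ((2:ℝ)/3)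
        = (m.beta g)⁻¹ * m.avg g i ^ ((2:ℝ)/3) * m.h i * m.beta g := by field_simp
      _ ≤ 2 / N * m.beta g := mul_le_mul_of_nonneg_right h1 h0.le

lemma IsEquidistributing.sum_h_sq_mul_integral_le (hE : m.IsEquidistributing g) :
    ∑ i ∈ Finset.range N, m.h i ^ 2 * ∫ t in (m.x i)..(m.x (i+1)), g t ^ 2
      ≤ 8 * m.alpha g / N ^ 2 := by
  have hterm : ∀ i ∈ Finset.range N,
      m.h i ^ 2 * ∫ t in (m.x i)..(m.x (i+1)), g t ^ 2 ≤ (2 / N * m.beta g) ^ 3 := by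
    intro i hi
    have hi := Finset.mem_range.1 hi
    have hh := m.h_pos hi
    have h1 := pow_le_pow_left₀ (m.term_nonneg g hi) (hE.term_le hi) 3
    rw [mul_pow, rpow_two_thirds_cube (m.avg_nonneg g i), m.avg_sq g hi] at h1
    refine le_trans (le_of_eq ?_) h1
    field_simp
  refine (Finset.sum_le_sum hterm).trans (le_of_eq ?_)
  rw [Finset.sum_const, Finset.card_range, nsmul_eq_mul, alpha_eq]
  rcases eq_or_ne (N:ℝ) 0 with h | h
  · simp [h]
  · field_simp; ring

variable (m) in
lemma integral_abs_rpow_le_beta {g : ℝ → ℝ}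
    (hg : MemLp g 2 (volume.restrict (Set.Ioc (0:ℝ) 1))) :
    ∫ t in (0:ℝ)..1, |g t| ^ ((2:ℝ)/3) ≤ m.beta g := by
  have hint := (integral_abs_rpow_le hg le_rfl zero_lt_one le_rfl).1
  rw [← m.sum_integral hint]
  refine Finset.sum_le_sum fun i hi => ?_
  have hi := Finset.mem_range.1 hi
  exact (integral_abs_rpow_le hg (m.x_mem hi.le).1 (m.x_mono i hi) (m.x_mem (i := i+1) hi).2).2

lemma beta_le {g : ℝ → ℝ} (hg : MemLp g 2 (volume.restrict (Set.Ioc (0:ℝ) 1))) :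
    m.beta g ≤ (∫ t in (0:ℝ)..1, g t ^ 2) ^ ((1:ℝ)/3) := by
  have hb : m.beta g ^ 3 ≤ ∫ t in (0:ℝ)..1, g t ^ 2 := by
    refine (Real.pow_arith_mean_le_arith_mean_pow (Finset.range N) m.h
      (fun i => m.avg g i ^ ((2:ℝ)/3)) (fun i hi => (m.h_pos (Finset.mem_range.1 hi)).le)
      m.sum_h (fun i _ => Real.rpow_nonneg (m.avg_nonneg g i) _) 3).trans (le_of_eq ?_)
    rw [← m.sum_integral (intervalIntegrable_sq_of_memLp hg)]
    refine Finset.sum_congr rfl fun i hi => ?_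
    have hi := Finset.mem_range.1 hi
    have := (m.h_pos hi).ne'
    rw [rpow_two_thirds_cube (m.avg_nonneg g i), m.avg_sq g hi]
    field_simp
  rw [← cube_rpow_third (m.beta_nonneg g)]
  exact Real.rpow_le_rpow (pow_nonneg (m.beta_nonneg g) 3) hb (by norm_num)

/-- The element average is subadditive with respect to a constant majorant. -/
lemma avg_le_add_avg {g d : ℝ → ℝ} (hg : MemLp g 2 (volume.restrict (Set.Ioc (0:ℝ) 1)))
    (hd : MemLp d 2 (volume.restrict (Set.Ioc (0:ℝ) 1))) {i : ℕ} (hi : i < N) {K : ℝ}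
    (hK : 0 ≤ K) (h : ∀ t ∈ Set.Icc (m.x i) (m.x (i+1)), |g t| ≤ K + |d t|) :
    m.avg g i ≤ K + m.avg d i := by
  have hle := (m.x_mono i hi).le
  have hh := m.h_pos hi
  have hsub : ∀ {g : ℝ → ℝ}, IntervalIntegrable g volume 0 1 →
      IntervalIntegrable g volume (m.x i) (m.x (i+1)) :=
    fun hg => intervalIntegrable_subinterval hg (m.x_mem hi.le) (m.x_mem (i := i+1) hi)
  have hd1 : IntervalIntegrable (fun t => |d t|) volume (m.x i) (m.x (i+1)) :=
    (hsub (intervalIntegrable_of_memLp hd)).abs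
  have hd2 : IntervalIntegrable (fun t => |d t| ^ 2) volume (m.x i) (m.x (i+1)) := by
    simpa only [sq_abs] using hsub (intervalIntegrable_sq_of_memLp hd)
  have h1 : ∫ t in (m.x i)..(m.x (i+1)), g t ^ 2
      ≤ ∫ t in (m.x i)..(m.x (i+1)), (|d t| - (-K)) ^ 2 := by
    refine intervalIntegral.integral_mono_on hle (hsub (intervalIntegrable_sq_of_memLp hg)) ?_
      fun t ht => ?_
    · have : ∀ t, (|d t| - (-K)) ^ 2 = |d t| ^ 2 + 2 * K * |d t| + K ^ 2 := fun t => by ring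
      simp only [this]
      exact (hd2.add (hd1.const_mul _)).add (by simp)
    · rw [← sq_abs (g t)]
      exact pow_le_pow_left₀ (abs_nonneg _) (by linarith [h t ht]) 2
  rw [integral_sub_const_sq hd1 hd2] at h1
  have h2 := sq_integral_le hle hd1 hd2
  simp only [sq_abs] at h1 h2
  set D := m.avg d i with hD
  have hD0 : 0 ≤ D := m.avg_nonneg d i
  have hDI : ∫ t in (m.x i)..(m.x (i+1)), d t ^ 2 = m.h i * D ^ 2 := by
    rw [hD, m.avg_sq d hi]; field_simp
  have hH : m.x (i+1) - m.x i = m.h i := rfl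
  rw [hDI, hH] at h1 h2
  have h3 : ∫ t in (m.x i)..(m.x (i+1)), |d t| ≤ m.h i * D :=
    abs_le_of_sq_le_sq' (by nlinarith) (by positivity) |>.2
  refine Real.sqrt_le_iff.2 ⟨by positivity, ?_⟩
  rw [one_div, inv_mul_le_iff₀ hh]
  nlinarith [mul_le_mul_of_nonneg_left h3 hK]

end Mesh

lemma IsPrimitive.abs_sub_le {F f : ℝ → ℝ} (h : IsPrimitive F f) {p q s t : ℝ} (hp : 0 ≤ p)
    (hq : q ≤ 1) (hs : s ∈ Set.Icc p q) (ht : t ∈ Set.Icc p q) :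
    |F s - F t| ≤ ∫ x in p..q, |f x| := by
  wlog hts : t ≤ s generalizing s t
  · rw [abs_sub_comm]; exact this ht hs (le_of_not_ge hts)
  have hmem : ∀ {y}, y ∈ Set.Icc p q → y ∈ Set.Icc (0:ℝ) 1 := fun hy =>
    ⟨hp.trans hy.1, hy.2.trans hq⟩
  have hpq := ht.1.trans ht.2
  rw [← h.integral_eq (hmem ht) (hmem hs)]
  refine (intervalIntegral.abs_integral_le_integral_abs hts).trans ?_
  exact intervalIntegral.integral_mono_interval ht.1 hts hs.2
    (Filter.Eventually.of_forall fun x => abs_nonneg _)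
    (intervalIntegrable_subinterval h.1 (hmem ⟨le_rfl, hpq⟩) (hmem ⟨hpq, le_rfl⟩)).abs

namespace Mesh

variable {N : ℕ} {m : Mesh N}

/-- Oscillation bound: comparing element averages of `g` with the integral of a nearby absolutely
continuous function `r`. -/
lemma beta_le_add {r r' g : ℝ → ℝ} (hr : IsPrimitive r r')
    (hg : MemLp g 2 (volume.restrict (Set.Ioc (0:ℝ) 1))) {H : ℝ}
    (hH : ∀ i < N, m.h i ≤ H) :
    m.beta g ≤ (∫ t in (0:ℝ)..1, |r t| ^ ((2:ℝ)/3)) + (H * L1 r') ^ ((2:ℝ)/3)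
      + m.beta (fun t => r t - g t) := by
  have hr2 : MemLp r 2 (volume.restrict (Set.Ioc (0:ℝ) 1)) := hr.memLp_top.mono_exponent le_top
  have hd : MemLp (fun t => r t - g t) 2 (volume.restrict (Set.Ioc (0:ℝ) 1)) := hr2.sub hg
  set R : ℕ → ℝ := fun i => ∫ x in (m.x i)..(m.x (i+1)), |r' x| with hR
  have hR0 : ∀ i < N, 0 ≤ R i := fun i hi =>
    intervalIntegral.integral_nonneg (m.x_mono i hi).le fun _ _ => abs_nonneg _
  have hint := (integral_abs_rpow_le hr2 le_rfl zero_lt_one le_rfl).1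
  have helem : ∀ i ∈ Finset.range N, m.h i * m.avg g i ^ ((2:ℝ)/3)
      ≤ (∫ t in (m.x i)..(m.x (i+1)), |r t| ^ ((2:ℝ)/3)) + m.h i * R i ^ ((2:ℝ)/3)
        + m.h i * m.avg (fun t => r t - g t) i ^ ((2:ℝ)/3) := by
    intro i hi
    have hi := Finset.mem_range.1 hi
    have hle := (m.x_mono i hi).le
    have hp := m.x_mem hi.le
    have hq := m.x_mem (i := i+1) hi
    have hpt : ∀ t ∈ Set.Icc (m.x i) (m.x (i+1)), m.avg g i ^ ((2:ℝ)/3)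
        ≤ |r t| ^ ((2:ℝ)/3)
          + (R i ^ ((2:ℝ)/3) + m.avg (fun t => r t - g t) i ^ ((2:ℝ)/3)) := by
      intro t ht
      have h1 : m.avg g i ≤ |r t| + R i + m.avg (fun t => r t - g t) i := by
        refine avg_le_add_avg hg hd hi (add_nonneg (abs_nonneg _) (hR0 i hi)) fun s hs => ?_
        have h2 := hr.abs_sub_le hp.1 hq.2 hs ht
        have h3 : |g s| ≤ |r t| + |r s - r t| + |r s - g s| := by
          have : g s = r t + (r s - r t) - (r s - g s) := by ring
          calc |g s| = |r t + (r s - r t) - (r s - g s)| := by rw [← this]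
            _ ≤ |r t + (r s - r t)| + |r s - g s| := abs_sub _ _
            _ ≤ _ := by gcongr; exact abs_add_le _ _
        exact h3.trans (by gcongr)
      have hA := m.avg_nonneg (fun t => r t - g t) i
      have h4 := Real.rpow_le_rpow (m.avg_nonneg g i) h1 (z := (2:ℝ)/3) (by norm_num)
      have h5 := Real.rpow_add_le_add_rpow (add_nonneg (abs_nonneg (r t)) (hR0 i hi)) hA
        (p := (2:ℝ)/3) (by norm_num) (by norm_num)
      have h6 := Real.rpow_add_le_add_rpow (abs_nonneg (r t)) (hR0 i hi)
        (p := (2:ℝ)/3) (by norm_num) (by norm_num)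
      linarith
    have hintK := intervalIntegrable_subinterval hint hp hq
    have := intervalIntegral.integral_mono_on (μ := volume) hle (by simp)
      (hintK.add (by simp)) hpt
    rw [intervalIntegral.integral_add hintK (by simp), intervalIntegral.integral_const,
      intervalIntegral.integral_const, smul_eq_mul, smul_eq_mul] at this
    have hHe : m.x (i+1) - m.x i = m.h i := rfl
    rw [hHe] at this
    linarith
  have hsum := Finset.sum_le_sum helem
  rw [Finset.sum_add_distrib, Finset.sum_add_distrib, m.sum_integral hint] at hsum
  have hosc : ∑ i ∈ Finset.range N, m.h i * R i ^ ((2:ℝ)/3) ≤ (H * L1 r') ^ ((2:ℝ)/3) := by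
    set T := ∑ i ∈ Finset.range N, m.h i * R i ^ ((2:ℝ)/3) with hT
    have hT0 : 0 ≤ T := Finset.sum_nonneg fun i hi =>
      mul_nonneg (m.h_pos (Finset.mem_range.1 hi)).le
        (Real.rpow_nonneg (hR0 i (Finset.mem_range.1 hi)) _)
    have h1 : T ^ ((3:ℝ)/2) ≤ ∑ i ∈ Finset.range N, m.h i * (R i ^ ((2:ℝ)/3)) ^ ((3:ℝ)/2) :=
      Real.rpow_arith_mean_le_arith_mean_rpow (Finset.range N) m.h (fun i => R i ^ ((2:ℝ)/3))
        (fun i hi => (m.h_pos (Finset.mem_range.1 hi)).le) m.sum_h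
        (fun i hi => Real.rpow_nonneg (hR0 i (Finset.mem_range.1 hi)) _) (by norm_num)
    have h2 : ∑ i ∈ Finset.range N, m.h i * (R i ^ ((2:ℝ)/3)) ^ ((3:ℝ)/2)
        ≤ ∑ i ∈ Finset.range N, H * R i := by
      refine Finset.sum_le_sum fun i hi => ?_
      have hi := Finset.mem_range.1 hi
      rw [← Real.rpow_mul (hR0 i hi)]
      norm_num
      exact mul_le_mul_of_nonneg_right (hH i hi) (hR0 i hi)
    rw [← Finset.mul_sum, hR, m.sum_integral hr.1.abs] at h2
    have h3 := Real.rpow_le_rpow (Real.rpow_nonneg hT0 _) (h1.trans h2)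
      (z := (2:ℝ)/3) (by norm_num)
    rw [← Real.rpow_mul hT0] at h3
    norm_num at h3
    exact h3
  unfold beta at *
  linarith

end Mesh

lemma rpow_neg_mul_le {q L β : ℝ} (hq : 0 < q) (hL : 0 ≤ L) (hβ : 0 ≤ β) (h : L ≤ q * β) :
    q ^ (-(3:ℝ)/2) * L ^ ((3:ℝ)/2) ≤ √(β ^ 3) := by
  have h1 : √(β ^ 3) = β ^ ((3:ℝ)/2) := by
    rw [Real.sqrt_eq_rpow, ← Real.rpow_natCast, ← Real.rpow_mul hβ]; norm_num
  rw [h1, neg_div, Real.rpow_neg hq.le, inv_mul_le_iff₀ (by positivity),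
    ← Real.mul_rpow hq.le hβ]
  exact Real.rpow_le_rpow hL h (by norm_num)

lemma le_rpow_neg_mul {q L β : ℝ} (hq : 0 < q) (hβ : 0 ≤ β) (h : q * β ≤ L) :
    √(β ^ 3) ≤ q ^ (-(3:ℝ)/2) * L ^ ((3:ℝ)/2) := by
  have h1 : √(β ^ 3) = β ^ ((3:ℝ)/2) := by
    rw [Real.sqrt_eq_rpow, ← Real.rpow_natCast, ← Real.rpow_mul hβ]; norm_num
  rw [h1, neg_div, Real.rpow_neg hq.le, le_inv_mul_iff₀ (by positivity),
    ← Real.mul_rpow hq.le hβ]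
  exact Real.rpow_le_rpow (by positivity) h (by norm_num)

/-- bounds on α_h for equidistributing meshes when r' ∈ L¹ (Theorem 2.1). -/
theorem statement1 (P : Coeffs) :
    ∃ c : ℝ, 0 < c ∧
      ∀ f : ℝ → ℝ, MemL2 f →
      ∀ u : H1, P.IsWeakSolution f u →
      ∀ r' : ℝ → ℝ, HasL1Deriv (P.res f u) r' →
      ∀ N : ℕ, c < (N:ℝ) →
      ∀ (m : Mesh N) (uh : H1), P.IsFESolution f m uh →
        m.IsEquidistributing (P.res f uh) →
        (1 + (c / (N:ℝ)) ^ ((2:ℝ)/3)) ^ (-(3:ℝ)/2) * Lp23 (P.res f u)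
            ≤ Real.sqrt (m.alpha (P.res f uh)) ∧
        Real.sqrt (m.alpha (P.res f uh))
            ≤ (1 - (c / (N:ℝ)) ^ ((2:ℝ)/3)) ^ (-(3:ℝ)/2) *
              ((Lp23 (P.res f u)) ^ ((2:ℝ)/3)
                + (c * L1 r' / (N:ℝ)) ^ ((2:ℝ)/3)) ^ ((3:ℝ)/2) := by
  obtain ⟨K, hK0, hK⟩ := P.exists_integral_res_sub_sq_le
  have ha := P.a0_pos
  refine ⟨2 + 3 * K / P.a0, by positivity, ?_⟩
  intro f hf u hu r' hr' N hN m uh huh hE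
  set c := 2 + 3 * K / P.a0 with hc
  have hc2 : 2 ≤ c := le_add_of_nonneg_right (by positivity)
  have hN0 : (0:ℝ) < N := lt_trans (by positivity) hN
  set r := P.res f u
  set rh := P.res f uh
  have hr : IsPrimitive r r' := hr'.2
  have hrL : MemLp r 2 (volume.restrict (Set.Ioc (0:ℝ) 1)) := P.memLp_res hf u
  have hrhL : MemLp rh 2 (volume.restrict (Set.Ioc (0:ℝ) 1)) := P.memLp_res hf uh
  have hdL : MemLp (fun t => r t - rh t) 2 (volume.restrict (Set.Ioc (0:ℝ) 1)) := hrL.sub hrhL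
  set β := m.beta rh
  have hβ0 : 0 ≤ β := m.beta_nonneg rh
  set κ := (c / (N:ℝ)) ^ ((2:ℝ)/3) with hκ
  have hκ0 : 0 ≤ κ := by positivity
  have hκ1 : κ < 1 := Real.rpow_lt_one (by positivity) ((div_lt_one hN0).2 hN) (by norm_num)
  have hS : ∫ t in (0:ℝ)..1, (r t - rh t) ^ 2 ≤ (c / N) ^ 2 * β ^ 3 := by
    have h1 := hK f u uh hu.1 huh.1
    have h2 := (P.error_le_residual m hf hu huh).trans hE.sum_h_sq_mul_integral_le
    rw [m.alpha_eq] at h2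
    have h3 : ∫ t in (0:ℝ)..1, (u.sub uh).dval t ^ 2 ≤ 8 * β ^ 3 / N ^ 2 / P.a0 ^ 2 := by
      rwa [le_div_iff₀' (by positivity)]
    refine h1.trans ((mul_le_mul_of_nonneg_left h3 (sq_nonneg K)).trans ?_)
    have h4 : K ^ 2 * (8 * β ^ 3 / N ^ 2 / P.a0 ^ 2)
        = 8 * (K / P.a0) ^ 2 / N ^ 2 * β ^ 3 := by field_simp
    rw [h4, div_pow c]
    have h5 : 0 ≤ K / P.a0 := by positivity
    have h6 : 8 * (K / P.a0) ^ 2 ≤ c ^ 2 := by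
      rw [hc, mul_div_assoc]; nlinarith
    gcongr
  have hS3 : (∫ t in (0:ℝ)..1, (r t - rh t) ^ 2) ^ ((1:ℝ)/3) ≤ κ * β := by
    refine (Real.rpow_le_rpow (intervalIntegral.integral_nonneg zero_le_one
      fun t _ => sq_nonneg _) hS (by norm_num)).trans (le_of_eq ?_)
    rw [Real.mul_rpow (sq_nonneg _) (by positivity), cube_rpow_third hβ0, sq_rpow_third,
      abs_of_nonneg (by positivity)]
  have hd := (Mesh.beta_le (m := m) hdL).trans hS3
  set L := ∫ t in (0:ℝ)..1, |r t| ^ ((2:ℝ)/3)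
  have hL0 : 0 ≤ L := intervalIntegral.integral_nonneg zero_le_one
    fun t _ => Real.rpow_nonneg (abs_nonneg _) _
  have hLp : Lp23 r = L ^ ((3:ℝ)/2) := rfl
  rw [m.alpha_eq, hLp]
  constructor
  · refine rpow_neg_mul_le (by positivity) hL0 hβ0 ?_
    have hI := fun {g : ℝ → ℝ} (hg : MemLp g 2 (volume.restrict (Set.Ioc (0:ℝ) 1))) =>
      (integral_abs_rpow_le hg le_rfl zero_lt_one le_rfl).1
    have h1 : L ≤ ∫ t in (0:ℝ)..1, (|rh t| ^ ((2:ℝ)/3) + |r t - rh t| ^ ((2:ℝ)/3)) := by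
      refine intervalIntegral.integral_mono_on zero_le_one (hI hrL) ((hI hrhL).add (hI hdL))
        fun t _ => ?_
      refine le_trans ?_ (Real.rpow_add_le_add_rpow (abs_nonneg _) (abs_nonneg _)
        (by norm_num) (by norm_num))
      refine Real.rpow_le_rpow (abs_nonneg _) ?_ (by norm_num)
      simpa using abs_add_le (rh t) (r t - rh t)
    rw [intervalIntegral.integral_add (hI hrhL) (hI hdL)] at h1
    have h2 := m.integral_abs_rpow_le_beta hrhL
    have h3 := m.integral_abs_rpow_le_beta hdL
    linarith
  · have hL1 : 0 ≤ L1 r' := intervalIntegral.integral_nonneg zero_le_one fun _ _ => abs_nonneg _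
    have hLL : (L ^ ((3:ℝ)/2)) ^ ((2:ℝ)/3) = L := by rw [← Real.rpow_mul hL0]; norm_num
    rw [hLL]
    refine le_rpow_neg_mul (by linarith) hβ0 ?_
    have h1 := Mesh.beta_le_add hr hrhL (m := m) (fun i hi => hE.h_le hi)
    have h2 : (2 / N * L1 r') ^ ((2:ℝ)/3) ≤ (c * L1 r' / N) ^ ((2:ℝ)/3) := by
      rw [div_mul_eq_mul_div]
      gcongr
    linarith

end EquidMesh
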